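/- arXiv:2011.10331 — 2 statements merged into one kernel-verified Lean document; each statement's English description precedes it below -/
import Mathlib

section
/- Let θ > 0 and let B ∈ ℝ^{n×m}. Then the function B ↦ ‖B‖_θ is differentiable at every B, and its gradient is the matrix D_B B; that is, for every i ∈ {1,…,n} and j ∈ {1,…,m}, the partial derivative of ‖·‖_θ at B with respect to the entry B_{i,j} equals D_{B,i} · B_{i,j}, where D_{B,i} = (2 + θ(‖B_{i,:}‖₂ + 2) + θ²‖B_{i,:}‖₂) / (θ²‖B_{i,:}‖₂² + 2θ‖B_{i,:}‖₂ + 1). -/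
open Finset

/-- The Euclidean norm of the `i`-th row of a matrix `B`. -/
noncomputable def rowNorm {n m : ℕ} (B : Fin n → Fin m → ℝ) (i : Fin n) : ℝ :=
  Real.sqrt (∑ j, B i j ^ 2)

/-- The `θ`-norm `‖B‖_θ = ∑ i, (1+θ)‖B_{i,:}‖₂² / (1 + θ‖B_{i,:}‖₂)`. -/
noncomputable def thetaNorm {n m : ℕ} (θ : ℝ) (B : Fin n → Fin m → ℝ) : ℝ :=
  ∑ i, (1 + θ) * rowNorm B i ^ 2 / (1 + θ * rowNorm B i)

/-- The diagonal entries of the matrix `D_B`. -/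
noncomputable def Dentry {n m : ℕ} (θ : ℝ) (B : Fin n → Fin m → ℝ) (i : Fin n) : ℝ :=
  (2 + θ * (rowNorm B i + 2) + θ ^ 2 * rowNorm B i) /
    (θ ^ 2 * rowNorm B i ^ 2 + 2 * θ * rowNorm B i + 1)

/-!
In terms of the squared row norm `s`, a row contributes `(1 + θ) s / (1 + θ √s)` to the `θ`-norm.
This is differentiable even at `s = 0`, where `√` is not: there it is `s` times a function that is
continuous at `0`. Since `s` is a polynomial in the entries, the chain rule gives the full
derivative of the `θ`-norm, also at matrices with vanishing rows.
-/

open ContinuousLinearMap (proj)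

section Calculus

variable {𝕜 : Type*} [NontriviallyNormedField 𝕜]

lemma hasDerivAt_sub_smul_of_continuousAt {E : Type*} [NormedAddCommGroup E] [NormedSpace 𝕜 E]
    {f : 𝕜 → E} {a : 𝕜} (hf : ContinuousAt f a) :
    HasDerivAt (fun x => (x - a) • f x) (f a) a := by
  rw [hasDerivAt_iff_tendsto_slope]
  refine (hf.tendsto.mono_left nhdsWithin_le_nhds).congr' ?_
  filter_upwards [self_mem_nhdsWithin] with x hx
  simp [slope_def_module, inv_smul_smul₀ (sub_ne_zero.mpr hx)]

lemma hasFDerivAt_sum_sq {ι : Type*} [Fintype ι] (x : ι → 𝕜) :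
    HasFDerivAt (fun y : ι → 𝕜 => ∑ j, y j ^ 2)
      (∑ j, (2 * x j) • (proj j : (ι → 𝕜) →L[𝕜] 𝕜)) x := by
  refine HasFDerivAt.fun_sum fun j _ => ?_
  have hcoord : HasFDerivAt (fun y : ι → 𝕜 => y j) (proj j : (ι → 𝕜) →L[𝕜] 𝕜) x :=
    hasFDerivAt_apply j x
  simpa using hcoord.pow 2

lemma hasDerivAt_update_comp {ι : Type*} [DecidableEq ι] {E : ι → Type*}
    [∀ i, NormedAddCommGroup (E i)] [∀ i, NormedSpace 𝕜 (E i)] (x : ∀ i, E i) {i : ι}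
    {f : 𝕜 → E i} {f' : E i} {t : 𝕜} (hf : HasDerivAt f f' t) :
    HasDerivAt (fun u => Function.update x i (f u)) (Pi.single i f') t := by
  refine hasDerivAt_pi.mpr fun k => ?_
  rcases eq_or_ne k i with rfl | hki
  · simpa using hf
  · simpa [hki] using hasDerivAt_const t (x k)

end Calculus

/-- The contribution `(1 + θ) s / (1 + θ √s)` of a single row to the `θ`-norm, as a function of the
squared Euclidean norm `s` of the row. -/
noncomputable def thetaProfile (θ s : ℝ) : ℝ :=
  (1 + θ) * s / (1 + θ * √s)

lemma hasDerivAt_thetaProfile_zero (θ : ℝ) : HasDerivAt (thetaProfile θ) (1 + θ) 0 := by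
  have hcont : ContinuousAt (fun s : ℝ => (1 + θ) / (1 + θ * √s)) 0 :=
    ContinuousAt.div (by fun_prop) (by fun_prop) (by simp)
  have hprofile : thetaProfile θ = fun s => (s - 0) • ((1 + θ) / (1 + θ * √s)) := by
    ext s
    simp only [thetaProfile, sub_zero, smul_eq_mul]
    ring
  rw [hprofile]
  simpa using hasDerivAt_sub_smul_of_continuousAt hcont

lemma hasDerivAt_thetaProfile {θ s : ℝ} (hs : 0 ≤ s) (hden : 1 + θ * √s ≠ 0) :
    HasDerivAt (thetaProfile θ) ((1 + θ) * (2 + θ * √s) / (1 + θ * √s) ^ 2 / 2) s := by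
  rcases hs.eq_or_lt with rfl | hpos
  · simpa using hasDerivAt_thetaProfile_zero θ
  · have hsqrt : √s ≠ 0 := (Real.sqrt_pos.mpr hpos).ne'
    have hquot := ((hasDerivAt_id s).const_mul (1 + θ)).div
      (((Real.hasDerivAt_sqrt hpos.ne').const_mul θ).const_add 1) hden
    refine hquot.congr_deriv ?_
    simp only [id_eq]
    field_simp
    linear_combination (1 + θ) * θ * Real.sq_sqrt hs

/-- The coordinate functional `B ↦ B i j` on matrices; the derivative of the `θ`-norm is expanded
in these functionals, so that its coefficients are the entries of the gradient. -/
noncomputable def entryCLM {ι κ : Type*} (i : ι) (j : κ) : (ι → κ → ℝ) →L[ℝ] ℝ :=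
  (proj j : (κ → ℝ) →L[ℝ] ℝ) ∘L proj i

@[simp]
lemma entryCLM_apply {ι κ : Type*} (i : ι) (j : κ) (B : ι → κ → ℝ) : entryCLM i j B = B i j :=
  rfl

section ThetaNorm

variable {n m : ℕ}

lemma thetaNorm_eq_sum_thetaProfile (θ : ℝ) (B : Fin n → Fin m → ℝ) :
    thetaNorm θ B = ∑ i, thetaProfile θ (∑ j, B i j ^ 2) := by
  refine Finset.sum_congr rfl fun i _ => ?_
  rw [thetaProfile, rowNorm, Real.sq_sqrt (by positivity)]

lemma Dentry_eq_div_sq (θ : ℝ) (B : Fin n → Fin m → ℝ) (i : Fin n) :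
    Dentry θ B i = (1 + θ) * (2 + θ * rowNorm B i) / (1 + θ * rowNorm B i) ^ 2 := by
  unfold Dentry
  congr 1 <;> ring

lemma hasFDerivAt_thetaProfile_row {θ : ℝ} {B : Fin n → Fin m → ℝ} {i : Fin n}
    (hden : 1 + θ * rowNorm B i ≠ 0) :
    HasFDerivAt (fun A : Fin n → Fin m → ℝ => thetaProfile θ (∑ j, A i j ^ 2))
      (∑ j, (Dentry θ B i * B i j) • entryCLM i j) B := by
  have hrow := (hasFDerivAt_sum_sq (B i)).comp B (proj (R := ℝ) i).hasFDerivAt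
  have hprofile := hasDerivAt_thetaProfile (s := ∑ j, B i j ^ 2) (by positivity) hden
  refine (hprofile.comp_hasFDerivAt B hrow).congr_fderiv ?_
  ext A
  simp only [Dentry_eq_div_sq, rowNorm, entryCLM_apply, FunLike.coe_smul, Pi.smul_apply,
    ContinuousLinearMap.comp_apply, ContinuousLinearMap.proj_apply, _root_.sum_apply,
    smul_eq_mul, Finset.mul_sum]
  exact Finset.sum_congr rfl fun j _ => by ring

lemma hasFDerivAt_thetaNorm {θ : ℝ} {B : Fin n → Fin m → ℝ}
    (hden : ∀ i, 1 + θ * rowNorm B i ≠ 0) :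
    HasFDerivAt (thetaNorm θ) (∑ i, ∑ j, (Dentry θ B i * B i j) • entryCLM i j) B := by
  rw [funext (thetaNorm_eq_sum_thetaProfile θ)]
  exact HasFDerivAt.fun_sum fun i _ => hasFDerivAt_thetaProfile_row (hden i)

end ThetaNorm

theorem stmt_0_general {n m : ℕ} (θ : ℝ) (B : Fin n → Fin m → ℝ)
    (hden : ∀ i, 1 + θ * rowNorm B i ≠ 0) :
    DifferentiableAt ℝ (thetaNorm θ) B ∧
    ∀ (i : Fin n) (j : Fin m),
      HasDerivAt
        (fun t : ℝ => thetaNorm θ (Function.update B i (Function.update (B i) j t)))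
        (Dentry θ B i * B i j) (B i j) := by
  have hgrad := hasFDerivAt_thetaNorm hden
  refine ⟨hgrad.differentiableAt, fun i j => ?_⟩
  have hentry := hasDerivAt_update_comp (i := i) B (hasDerivAt_update (B i) j (B i j))
  refine (hgrad.comp_hasDerivAt_of_eq (B i j) hentry (by simp)).congr_deriv ?_
  simp [Pi.single_apply, ite_apply]

/-- For `θ > 0`, the `θ`-norm is differentiable at every `B`, and its partial derivative with
respect to the entry `B i j` equals `(D_B)_{i,i} * B i j`, i.e. the gradient is `D_B • B`. -/
theorem stmt_0 {n m : ℕ} (θ : ℝ) (hθ : 0 < θ) (B : Fin n → Fin m → ℝ) :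
    DifferentiableAt ℝ (thetaNorm θ) B ∧
    ∀ (i : Fin n) (j : Fin m),
      HasDerivAt
        (fun t : ℝ => thetaNorm θ (Function.update B i (Function.update (B i) j t)))
        (Dentry θ B i * B i j) (B i j) :=
  stmt_0_general θ B fun i => by unfold rowNorm; positivity
end

section
/- Let θ > 0. Then the function B ↦ ‖B‖_θ on ℝ^{n×m} is convex. -/
open Finset

/-!
Each summand is `1 + θ` times `φ (‖B_{i,:}‖₂)` with `φ t = t ^ 2 / (1 + θ * t)`. Since a
nondecreasing convex function of a convex function is convex, it suffices that `φ` is convex and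
nondecreasing on `[0, ∞)`. Convexity holds because `x ^ 2 / p`, for `p > 0`, is the maximum over
`c` of the functions `2 * c * x - c ^ 2 * p`, which are linear in `(x, p)`.
-/

section OrderedModule

variable {𝕜 E β : Type*} [Semiring 𝕜] [PartialOrder 𝕜] [AddCommMonoid E] [SMul 𝕜 E]
  [AddCommMonoid β] [PartialOrder β] {s : Set E}

lemma convexOn_finset_sum [IsOrderedAddMonoid β] [DistribSMul 𝕜 β] {ι : Type*} {t : Finset ι}
    {f : ι → E → β} (hs : Convex 𝕜 s) (hf : ∀ i ∈ t, ConvexOn 𝕜 s (f i)) :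
    ConvexOn 𝕜 s fun x ↦ ∑ i ∈ t, f i x := by
  refine ⟨hs, fun x hx y hy a b ha hb hab ↦ ?_⟩
  simp only [smul_sum, ← sum_add_distrib]
  exact sum_le_sum fun i hi ↦ (hf i hi).2 hx hy ha hb hab

lemma convexOn_comp_of_mapsTo {γ : Type*} [AddCommMonoid γ] [PartialOrder γ] [SMul 𝕜 β]
    [SMul 𝕜 γ] {t : Set β} {f : E → β} {g : β → γ} (hg : ConvexOn 𝕜 t g)
    (hg_mono : MonotoneOn g t) (hf : ConvexOn 𝕜 s f) (hst : Set.MapsTo f s t) :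
    ConvexOn 𝕜 s (g ∘ f) := by
  refine ⟨hf.1, fun x hx y hy a b ha hb hab ↦ ?_⟩
  calc g (f (a • x + b • y)) ≤ g (a • f x + b • f y) :=
        hg_mono (hst (hf.1 hx hy ha hb hab)) (hg.1 (hst hx) (hst hy) ha hb hab)
          (hf.2 hx hy ha hb hab)
    _ ≤ a • g (f x) + b • g (f y) := hg.2 (hst hx) (hst hy) ha hb hab

end OrderedModule

section QuadraticOverLinear

variable {𝕜 E : Type*} [Field 𝕜] [LinearOrder 𝕜] [IsStrictOrderedRing 𝕜]
  [AddCommMonoid E] [SMul 𝕜 E] {s : Set E}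

lemma two_mul_mul_sub_sq_mul_le_sq_div (c x : 𝕜) {p : 𝕜} (hp : 0 < p) :
    2 * c * x - c ^ 2 * p ≤ x ^ 2 / p := by
  rw [le_div_iff₀ hp]
  linarith [sq_nonneg (x - c * p)]

lemma convexOn_sq_div {f g : E → 𝕜} (hf : ConvexOn 𝕜 s f) (hf_nonneg : ∀ x ∈ s, 0 ≤ f x)
    (hg : ConcaveOn 𝕜 s g) (hg_pos : ∀ x ∈ s, 0 < g x) :
    ConvexOn 𝕜 s fun x ↦ f x ^ 2 / g x := by
  refine ⟨hf.1, fun x hx y hy a b ha hb hab ↦ ?_⟩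
  have hz : a • x + b • y ∈ s := hf.1 hx hy ha hb hab
  have hfz := hf.2 hx hy ha hb hab
  have hgz := hg.2 hx hy ha hb hab
  set z := a • x + b • y
  have hgz_pos := hg_pos z hz
  -- The slope at which the lower bound `2 * c * f z - c ^ 2 * g z` is attained.
  set c := f z / g z with hc
  have hc_nonneg : 0 ≤ c := div_nonneg (hf_nonneg z hz) hgz_pos.le
  simp only [smul_eq_mul] at hfz hgz ⊢
  calc f z ^ 2 / g z = 2 * c * f z - c ^ 2 * g z := by rw [hc]; field
    _ ≤ 2 * c * (a * f x + b * f y) - c ^ 2 * (a * g x + b * g y) := by gcongr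
    _ = a * (2 * c * f x - c ^ 2 * g x) + b * (2 * c * f y - c ^ 2 * g y) := by ring
    _ ≤ a * (f x ^ 2 / g x) + b * (f y ^ 2 / g y) := by
      gcongr
      · exact two_mul_mul_sub_sq_mul_le_sq_div c (f x) (hg_pos x hx)
      · exact two_mul_mul_sub_sq_mul_le_sq_div c (f y) (hg_pos y hy)

variable {θ : 𝕜}

lemma convexOn_Ici_sq_div_one_add_mul (hθ : 0 ≤ θ) :
    ConvexOn 𝕜 (Set.Ici 0) fun t : 𝕜 ↦ t ^ 2 / (1 + θ * t) := by
  have affine_concave : ConcaveOn 𝕜 (Set.Ici 0) fun t : 𝕜 ↦ 1 + θ * t :=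
    (concaveOn_const 1 (convex_Ici 0)).add ((concaveOn_id (convex_Ici 0)).smul hθ)
  exact convexOn_sq_div (convexOn_id (convex_Ici 0)) (fun t ht ↦ ht) affine_concave
    fun t ht ↦ add_pos_of_pos_of_nonneg one_pos (mul_nonneg hθ ht)

lemma monotoneOn_Ici_sq_div_one_add_mul (hθ : 0 ≤ θ) :
    MonotoneOn (fun t : 𝕜 ↦ t ^ 2 / (1 + θ * t)) (Set.Ici 0) := by
  intro x (hx : 0 ≤ x) y (hy : 0 ≤ y) hxy
  have hsq : x ^ 2 ≤ y ^ 2 := by gcongr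
  have hcross : θ * (x * y) * x ≤ θ * (x * y) * y := by gcongr
  rw [div_le_div_iff₀ (by positivity) (by positivity)]
  linarith

lemma convexOn_sq_div_one_add_mul {f : E → 𝕜} (hθ : 0 ≤ θ) (hf : ConvexOn 𝕜 s f)
    (hf_nonneg : ∀ x ∈ s, 0 ≤ f x) : ConvexOn 𝕜 s fun x ↦ f x ^ 2 / (1 + θ * f x) :=
  convexOn_comp_of_mapsTo (convexOn_Ici_sq_div_one_add_mul hθ)
    (monotoneOn_Ici_sq_div_one_add_mul hθ) hf hf_nonneg

end QuadraticOverLinear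

section RowNorm

variable {n m : ℕ}

lemma rowNorm_eq_norm_toLp (B : Fin n → Fin m → ℝ) (i : Fin n) :
    rowNorm B i = ‖WithLp.toLp 2 (B i)‖ := by
  simp [rowNorm, EuclideanSpace.norm_eq]

lemma rowNorm_nonneg (B : Fin n → Fin m → ℝ) (i : Fin n) : 0 ≤ rowNorm B i :=
  Real.sqrt_nonneg _

lemma convexOn_rowNorm (i : Fin n) :
    ConvexOn ℝ Set.univ fun B : Fin n → Fin m → ℝ ↦ rowNorm B i := by
  simp only [rowNorm_eq_norm_toLp]
  let row : (Fin n → Fin m → ℝ) →ₗ[ℝ] EuclideanSpace ℝ (Fin m) :=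
    (WithLp.linearEquiv 2 ℝ (Fin m → ℝ)).symm.toLinearMap ∘ₗ LinearMap.proj i
  exact convexOn_univ_norm.comp_linearMap row

end RowNorm

/-- For `θ > 0`, the function `B ↦ ‖B‖_θ` on `ℝ^{n×m}` is convex. -/
theorem stmt_3 {n m : ℕ} (θ : ℝ) (hθ : 0 < θ) :
    ConvexOn ℝ Set.univ (thetaNorm θ : (Fin n → Fin m → ℝ) → ℝ) := by
  refine convexOn_finset_sum convex_univ fun i _ ↦ ?_
  have hrow : ConvexOn ℝ Set.univ fun B : Fin n → Fin m → ℝ ↦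
      rowNorm B i ^ 2 / (1 + θ * rowNorm B i) :=
    convexOn_sq_div_one_add_mul hθ.le (convexOn_rowNorm i) fun B _ ↦ rowNorm_nonneg B i
  simpa only [mul_div_assoc, smul_eq_mul] using hrow.smul (add_pos one_pos hθ).le
end
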